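/- (Discrete entropy inequality at the constrained cell.) Let s ∈ ℝ, q ≥ 0, L := sup_{[0,1]}|f'| + |s|, and Δx, Δt > 0 with 2LΔt ≤ Δx (CFL). Let α ≥ Δx, β := α + Δx − sΔt, and H(u,v,w,z) := (vα + wΔx − (EO(w,z) − min{God^s(u,v), q})Δt)/β. Then for every κ ∈ [0,1] and all u,v,w,z ∈ [0,1]: β·|H(u,v,w,z) − κ| ≤ α·|v − κ| + Δx·|w − κ| − Δt·(Φ_out − Φ_int) + (Δt/2)·ℛ_s(κ,q), where Φ_out := EO(max(w,κ), max(z,κ)) − EO(min(w,κ), min(z,κ)), Φ_int := min{God^s(max(u,κ), max(v,κ)), q} − min{God^s(min(u,κ), min(v,κ)), q}, and ℛ_s(κ,q) := 2(F_s(κ) − min{F_s(κ), q}). -/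

import Mathlib

/-!
The unnormalised update
`N(u,v,w,z) = vα + wΔx - (EO(w,z) - min{God(u,v), q})Δt` is nondecreasing in each of its four
arguments on `[0,1]`: the Engquist-Osher flux is monotone because a concave `f` increases up to its
maximiser and decreases afterwards, the Godunov flux is nondecreasing in its first argument, and the
CFL condition absorbs the variation of the fluxes in `w` and `v`, the flux `F_s` being Lipschitz
with constant `L = sup|f'| + |s|` (`God_sub_le` transfers this to the Godunov flux).

Hence `|N(u,v,w,z) - N(κ,κ,κ,κ)|` is at most the value of `N` at the componentwise maxima with `κ`
minus its value at the componentwise minima, which is the right-hand side without the remainder.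
Consistency of the two numerical fluxes gives
`βκ - N(κ,κ,κ,κ) = Δt (F_s(κ) - min{F_s(κ), q})`, half the remainder times `Δt`, and the triangle
inequality concludes.
-/

open MeasureTheory Set Filter Topology

noncomputable section

/-- The normal flux `F_s(ρ) = f(ρ) - s·ρ` through the line of slope `s`. -/
def Flx (f : ℝ → ℝ) (s ρ : ℝ) : ℝ := f ρ - s * ρ

/-- The Kruzhkov entropy flux `Φ_s(a,b) = sgn(a-b)(F_s(a) - F_s(b))`. -/
def EFlx (f : ℝ → ℝ) (s a b : ℝ) : ℝ := Real.sign (a - b) * (Flx f s a - Flx f s b)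

/-- `f` is a bell-shaped flux with critical density `ρb`:
`f` is `C²` on `[0,1]`, vanishes at `0` and `1`, is concave on `[0,1]`, and its
derivative has the sign of `ρb - ρ` a.e. on `(0,1)`. -/
structure BellShaped (f : ℝ → ℝ) (ρb : ℝ) : Prop where
  smooth : ContDiffOn ℝ 2 f (Icc 0 1)
  zero_at_zero : f 0 = 0
  zero_at_one : f 1 = 0
  concave : ConcaveOn ℝ (Icc 0 1) f
  crit_mem : ρb ∈ Ioo (0:ℝ) 1
  deriv_sign : ∀ᵐ ρ ∂(volume.restrict (Ioo (0:ℝ) 1)),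
    0 < derivWithin f (Icc 0 1) ρ * (ρb - ρ)

/-- `max_{[0,1]} F_s`. -/
def maxFlx (f : ℝ → ℝ) (s : ℝ) : ℝ := sSup (Flx f s '' Icc 0 1)

/-- Admissible slope–constraint pair `(s,q)`. -/
def AdmissiblePair (f : ℝ → ℝ) (s q : ℝ) : Prop :=
  (0 ≤ s ∧ 0 ≤ q ∧ q < maxFlx f s) ∨ (s < 0 ∧ -s ≤ q ∧ q < maxFlx f s)

/-- The admissibility germ `G_s(q) = G¹ ∪ G² ∪ G³`. -/
def Germ (f : ℝ → ℝ) (s q : ℝ) : Set (ℝ × ℝ) :=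
  {p | p.1 ∈ Icc (0:ℝ) 1 ∧ p.2 ∈ Icc (0:ℝ) 1 ∧
    ((p.2 < p.1 ∧ Flx f s p.1 = q ∧ Flx f s p.2 = q) ∨
     (p.1 = p.2 ∧ Flx f s p.1 ≤ q) ∨
     (p.1 < p.2 ∧ Flx f s p.1 = Flx f s p.2 ∧ Flx f s p.1 ≤ q))}

/-- The constraint remainder `ℛ_s(κ,q) = 2(F_s(κ) - min{F_s(κ), q})`. -/
def Rem (f : ℝ → ℝ) (s κ q : ℝ) : ℝ := 2 * (Flx f s κ - min (Flx f s κ) q)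

/-- The Engquist–Osher numerical flux of `f` (with `ρb` the maximiser of `f`):
`EO(a,b) = f(min(a,ρb)) + f(max(b,ρb)) - f(ρb)`. -/
def EO (f : ℝ → ℝ) (ρb a b : ℝ) : ℝ := f (min a ρb) + f (max b ρb) - f ρb

/-- The Godunov numerical flux of `F_s`. -/
def God (f : ℝ → ℝ) (s a b : ℝ) : ℝ :=
  if a ≤ b then sInf (Flx f s '' Icc a b) else sSup (Flx f s '' Icc b a)

/-- `sup_{[0,1]} |f'|`. -/
def supDeriv (f : ℝ → ℝ) : ℝ :=
  sSup ((fun ρ => |derivWithin f (Icc (0:ℝ) 1) ρ|) '' Icc (0:ℝ) 1)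

/-- Constrained marching formula for the cell on the right of the interface. -/
def Hright (f : ℝ → ℝ) (ρb s q Δx Δt α : ℝ) (u v w z : ℝ) : ℝ :=
  (v * α + w * Δx - (EO f ρb w z - min (God f s u v) q) * Δt) / (α + Δx - s * Δt)

/-- Constrained marching formula for the cell on the left of the interface. -/
def Hleft (f : ℝ → ℝ) (ρb s q Δx Δt γ : ℝ) (u v w : ℝ) : ℝ :=
  (v * γ - (min (God f s v w) q - EO f ρb u v) * Δt) / (γ + s * Δt)

theorem BellShaped.monotone_left {f : ℝ → ℝ} {ρb : ℝ} (hf : BellShaped f ρb)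
    (hmax : IsMaxOn f (Icc (0:ℝ) 1) ρb) {a b : ℝ} (ha : 0 ≤ a) (hab : a ≤ b) (hb : b ≤ ρb) :
    f a ≤ f b := by
  have hρ := hf.crit_mem
  have haI : a ∈ Icc (0:ℝ) 1 := ⟨ha, by linarith [hρ.2]⟩
  have hρI : ρb ∈ Icc (0:ℝ) 1 := Ioo_subset_Icc_self hρ
  have h := hf.concave.min_le_of_mem_Icc haI hρI ⟨hab, hb⟩
  rwa [min_eq_left (hmax haI)] at h

theorem BellShaped.antitone_right {f : ℝ → ℝ} {ρb : ℝ} (hf : BellShaped f ρb)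
    (hmax : IsMaxOn f (Icc (0:ℝ) 1) ρb) {a b : ℝ} (ha : ρb ≤ a) (hab : a ≤ b) (hb : b ≤ 1) :
    f b ≤ f a := by
  have hρ := hf.crit_mem
  have hbI : b ∈ Icc (0:ℝ) 1 := ⟨by linarith [hρ.1], hb⟩
  have hρI : ρb ∈ Icc (0:ℝ) 1 := Ioo_subset_Icc_self hρ
  have h := hf.concave.min_le_of_mem_Icc hρI hbI ⟨ha, hab⟩
  rwa [min_eq_right (hmax hbI)] at h

theorem supDeriv_nonneg (f : ℝ → ℝ) : 0 ≤ supDeriv f := by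
  apply Real.sSup_nonneg
  rintro _ ⟨x, -, rfl⟩
  exact abs_nonneg _

theorem BellShaped.abs_sub_le {f : ℝ → ℝ} {ρb : ℝ} (hf : BellShaped f ρb) {a b : ℝ}
    (ha : a ∈ Icc (0:ℝ) 1) (hb : b ∈ Icc (0:ℝ) 1) :
    |f b - f a| ≤ supDeriv f * |b - a| := by
  have hc : ContinuousOn (fun ρ => |derivWithin f (Icc (0:ℝ) 1) ρ|) (Icc (0:ℝ) 1) :=
    (hf.smooth.continuousOn_derivWithin (uniqueDiffOn_Icc zero_lt_one) (by norm_num)).abs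
  have hbdd := (isCompact_Icc.image_of_continuousOn hc).bddAbove
  have := Convex.norm_image_sub_le_of_norm_derivWithin_le (C := supDeriv f)
    (hf.smooth.differentiableOn (by norm_num))
    (fun x hx => le_csSup hbdd (mem_image_of_mem _ hx)) (convex_Icc 0 1) ha hb
  simpa [Real.norm_eq_abs] using this

theorem BellShaped.abs_Flx_sub_le {f : ℝ → ℝ} {ρb : ℝ} (hf : BellShaped f ρb) (s : ℝ) {a b : ℝ}
    (ha : a ∈ Icc (0:ℝ) 1) (hb : b ∈ Icc (0:ℝ) 1) :
    |Flx f s b - Flx f s a| ≤ (supDeriv f + |s|) * |b - a| := by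
  have h1 := hf.abs_sub_le ha hb
  have h2 : Flx f s b - Flx f s a = (f b - f a) - s * (b - a) := by unfold Flx; ring
  have h3 := abs_sub (f b - f a) (s * (b - a))
  rw [abs_mul] at h3
  rw [h2]
  linarith

theorem BellShaped.continuousOn_Flx {f : ℝ → ℝ} {ρb : ℝ} (hf : BellShaped f ρb) (s : ℝ) :
    ContinuousOn (Flx f s) (Icc 0 1) :=
  hf.smooth.continuousOn.sub (by fun_prop)

/-- The infimum in the Godunov flux is attained when `a ≤ b`. -/
theorem God_of_le {f : ℝ → ℝ} {ρb : ℝ} (hf : BellShaped f ρb) (s : ℝ) {a b : ℝ}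
    (ha : 0 ≤ a) (hb : b ≤ 1) (hab : a ≤ b) :
    ∃ x ∈ Icc a b, God f s a b = Flx f s x ∧ ∀ y ∈ Icc a b, Flx f s x ≤ Flx f s y := by
  have hc := (hf.continuousOn_Flx s).mono (Icc_subset_Icc ha hb)
  obtain ⟨x, hx, h1, h2⟩ := isCompact_Icc.exists_sInf_image_eq_and_le (nonempty_Icc.2 hab) hc
  exact ⟨x, hx, by rw [God, if_pos hab, h1], h2⟩

/-- The supremum in the Godunov flux is attained; for `a = b` this agrees with the infimum branch
of the definition. -/
theorem God_of_ge {f : ℝ → ℝ} {ρb : ℝ} (hf : BellShaped f ρb) (s : ℝ) {a b : ℝ}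
    (hb : 0 ≤ b) (ha : a ≤ 1) (hba : b ≤ a) :
    ∃ x ∈ Icc b a, God f s a b = Flx f s x ∧ ∀ y ∈ Icc b a, Flx f s y ≤ Flx f s x := by
  rcases hba.eq_or_lt with rfl | hlt
  · refine ⟨b, by simp, by simp [God], fun y hy => ?_⟩
    rw [le_antisymm hy.2 hy.1]
  · have hc := (hf.continuousOn_Flx s).mono (Icc_subset_Icc hb ha)
    obtain ⟨x, hx, h1, h2⟩ := isCompact_Icc.exists_sSup_image_eq_and_ge (nonempty_Icc.2 hba) hc
    exact ⟨x, hx, by rw [God, if_neg hlt.not_ge, h1], h2⟩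

theorem God_mono_left {f : ℝ → ℝ} {ρb : ℝ} (hf : BellShaped f ρb) (s : ℝ) {u u' v : ℝ}
    (hu : 0 ≤ u) (hu' : u' ≤ 1) (hv : v ∈ Icc (0:ℝ) 1) (h : u ≤ u') :
    God f s u v ≤ God f s u' v := by
  rcases le_total u v with h1 | h1
  · obtain ⟨x, hx, e, hm⟩ := God_of_le hf s hu hv.2 h1
    rw [e]
    rcases le_total u' v with h2 | h2
    · obtain ⟨y, hy, e', -⟩ := God_of_le hf s (hu.trans h) hv.2 h2
      rw [e']
      exact hm y ⟨h.trans hy.1, hy.2⟩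
    · obtain ⟨y, hy, e', hm'⟩ := God_of_ge hf s hv.1 hu' h2
      rw [e']
      exact (hm v ⟨h1, le_rfl⟩).trans (hm' v ⟨le_rfl, h2⟩)
  · obtain ⟨x, hx, e, -⟩ := God_of_ge hf s hv.1 (h.trans hu') h1
    obtain ⟨y, hy, e', hm'⟩ := God_of_ge hf s hv.1 hu' (h1.trans h)
    rw [e, e']
    exact hm' x ⟨hx.1, hx.2.trans h⟩

/-- One-sided Lipschitz bound for the Godunov flux in its second argument. -/
theorem God_sub_le {f : ℝ → ℝ} {ρb : ℝ} (hf : BellShaped f ρb) (s : ℝ) {u v v' : ℝ}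
    (hu : u ∈ Icc (0:ℝ) 1) (hv : 0 ≤ v) (hv' : v' ≤ 1) (h : v ≤ v') :
    God f s u v - God f s u v' ≤ (supDeriv f + |s|) * (v' - v) := by
  have hK : 0 ≤ supDeriv f + |s| := add_nonneg (supDeriv_nonneg f) (abs_nonneg s)
  have key : ∀ x y : ℝ, v ≤ x → x ≤ y → y ≤ v' →
      Flx f s x - Flx f s y ≤ (supDeriv f + |s|) * (v' - v) := by
    intro x y h1 h2 h3
    have h4 := hf.abs_Flx_sub_le s (a := y) (b := x) ⟨by linarith, by linarith⟩
      ⟨by linarith, by linarith⟩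
    have h5 : |x - y| ≤ v' - v := by rw [abs_le]; constructor <;> linarith
    exact (le_abs_self _).trans (h4.trans (mul_le_mul_of_nonneg_left h5 hK))
  have hnn : 0 ≤ (supDeriv f + |s|) * (v' - v) := mul_nonneg hK (by linarith)
  rcases le_total u v with h1 | h1
  · obtain ⟨x, hx, e, hm⟩ := God_of_le hf s hu.1 (h.trans hv') h1
    obtain ⟨y, hy, e', -⟩ := God_of_le hf s hu.1 hv' (h1.trans h)
    rw [e, e']
    rcases le_total y v with h2 | h2
    · linarith [hm y ⟨hy.1, h2⟩]
    · linarith [hm v ⟨h1, le_rfl⟩, key v y le_rfl h2 hy.2]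
  · obtain ⟨x, hx, e, -⟩ := God_of_ge hf s hv hu.2 h1
    rcases le_total u v' with h2 | h2
    · obtain ⟨y, hy, e', -⟩ := God_of_le hf s hu.1 hv' h2
      rw [e, e']
      exact key x y hx.1 (hx.2.trans hy.1) hy.2
    · obtain ⟨y, hy, e', hm'⟩ := God_of_ge hf s (hv.trans h) hu.2 h2
      rw [e, e']
      rcases le_total v' x with h3 | h3
      · linarith [hm' x ⟨h3, hx.2⟩]
      · linarith [hm' v' ⟨le_rfl, h2⟩, key x v' hx.1 h3 le_rfl]

theorem God_self (f : ℝ → ℝ) (s a : ℝ) : God f s a a = Flx f s a := by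
  simp [God]

theorem EO_self (f : ℝ → ℝ) (ρb a : ℝ) : EO f ρb a a = f a := by
  unfold EO
  rcases le_total a ρb with h | h <;> simp [h]

/-- Increments of the Engquist-Osher flux: nonincreasing in the second argument, and Lipschitz from
one side in the first. -/
theorem EO_sub_le {f : ℝ → ℝ} {ρb : ℝ} (hf : BellShaped f ρb)
    (hmax : IsMaxOn f (Icc (0:ℝ) 1) ρb) {w w' z z' : ℝ} (hw : 0 ≤ w)
    (hww : w ≤ w') (hz' : z' ≤ 1) (hzz : z ≤ z') :
    EO f ρb w' z' - EO f ρb w z ≤ supDeriv f * (w' - w) := by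
  have hρ := hf.crit_mem
  have h1 : f (max z' ρb) ≤ f (max z ρb) :=
    hf.antitone_right hmax (le_max_right _ _) (max_le_max_right _ hzz) (max_le hz' hρ.2.le)
  have h2 : min w ρb ≤ min w' ρb := min_le_min_right _ hww
  have h3 : min w' ρb - min w ρb ≤ w' - w := by
    rcases le_total w ρb with h | h
    · rw [min_eq_left h]; linarith [min_le_left w' ρb]
    · rw [min_eq_right h]; linarith [min_le_right w' ρb]
  have h0 : 0 ≤ min w ρb := le_min hw hρ.1.le
  have h4 := hf.abs_sub_le (a := min w ρb) (b := min w' ρb)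
    ⟨h0, (min_le_right _ _).trans hρ.2.le⟩ ⟨h0.trans h2, (min_le_right _ _).trans hρ.2.le⟩
  rw [abs_of_nonneg (by linarith : (0:ℝ) ≤ min w' ρb - min w ρb)] at h4
  have h5 := mul_le_mul_of_nonneg_left h3 (supDeriv_nonneg f)
  have h6 := le_abs_self (f (min w' ρb) - f (min w ρb))
  unfold EO
  linarith

/-- The unnormalised update of the constrained cell: the numerator of `Hright`. -/
def cellUpdate (f : ℝ → ℝ) (ρb s q Δx Δt α u v w z : ℝ) : ℝ :=
  v * α + w * Δx - (EO f ρb w z - min (God f s u v) q) * Δt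

theorem cellUpdate_mono {f : ℝ → ℝ} {ρb : ℝ} (hf : BellShaped f ρb)
    (hmax : IsMaxOn f (Icc (0:ℝ) 1) ρb) (s q : ℝ) {Δx Δt α : ℝ} (hΔx : 0 < Δx) (hΔt : 0 < Δt)
    (hCFL : 2 * (supDeriv f + |s|) * Δt ≤ Δx) (hα : Δx ≤ α)
    {u v w z u' v' w' z' : ℝ} (hu : 0 ≤ u) (hv : 0 ≤ v) (hw : 0 ≤ w)
    (hu' : u' ≤ 1) (hv' : v' ≤ 1) (hw' : w' ≤ 1) (hz' : z' ≤ 1)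
    (huu : u ≤ u') (hvv : v ≤ v') (hww : w ≤ w') (hzz : z ≤ z') :
    cellUpdate f ρb s q Δx Δt α u v w z ≤ cellUpdate f ρb s q Δx Δt α u' v' w' z' := by
  have hL := supDeriv_nonneg f
  have hs := abs_nonneg s
  have hLt := mul_nonneg hL hΔt.le
  have hst := mul_nonneg hs hΔt.le
  have hE := EO_sub_le hf hmax hw hww hz' hzz
  have hG1 := God_mono_left hf s hu hu' ⟨hv, hvv.trans hv'⟩ huu
  have hG2 := God_sub_le hf s ⟨hu.trans huu, hu'⟩ hv hv' hvv
  have hG : God f s u v - (supDeriv f + |s|) * (v' - v) ≤ God f s u' v' := by linarith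
  have hnn : 0 ≤ (supDeriv f + |s|) * (v' - v) :=
    mul_nonneg (add_nonneg hL hs) (by linarith)
  have hM : min (God f s u v) q - (supDeriv f + |s|) * (v' - v) ≤ min (God f s u' v') q := by
    apply le_min
    · linarith [min_le_left (God f s u v) q]
    · linarith [min_le_right (God f s u v) q]
  have hE' := mul_le_mul_of_nonneg_right hE hΔt.le
  have hM' := mul_le_mul_of_nonneg_right hM hΔt.le
  have h1 : 0 ≤ (Δx - supDeriv f * Δt) * (w' - w) :=
    mul_nonneg (by linarith) (by linarith)
  have h2 : 0 ≤ (α - (supDeriv f + |s|) * Δt) * (v' - v) :=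
    mul_nonneg (by linarith) (by linarith)
  unfold cellUpdate
  linarith

/-- discrete entropy inequality at the constrained cell. -/
theorem discrete_entropy_inequality_constrained_cell
    (f : ℝ → ℝ) (ρb : ℝ) (hf : BellShaped f ρb)
    (hmax : IsMaxOn f (Icc (0:ℝ) 1) ρb)
    (s q : ℝ) (hq : 0 ≤ q)
    (Δx Δt α : ℝ) (hΔx : 0 < Δx) (hΔt : 0 < Δt)
    (hCFL : 2 * (supDeriv f + |s|) * Δt ≤ Δx) (hα : Δx ≤ α)
    (κ : ℝ) (hκ : κ ∈ Icc (0:ℝ) 1)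
    (u v w z : ℝ) (hu : u ∈ Icc (0:ℝ) 1) (hv : v ∈ Icc (0:ℝ) 1)
    (hw : w ∈ Icc (0:ℝ) 1) (hz : z ∈ Icc (0:ℝ) 1) :
    (α + Δx - s * Δt) * |Hright f ρb s q Δx Δt α u v w z - κ| ≤
      α * |v - κ| + Δx * |w - κ|
        - Δt * ((EO f ρb (max w κ) (max z κ) - EO f ρb (min w κ) (min z κ))
            - (min (God f s (max u κ) (max v κ)) q
                - min (God f s (min u κ) (min v κ)) q))
        + Δt / 2 * Rem f s κ q := by
  have hst : s * Δt ≤ |s| * Δt := mul_le_mul_of_nonneg_right (le_abs_self s) hΔt.le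
  have hLt := mul_nonneg (supDeriv_nonneg f) hΔt.le
  have hst' := mul_nonneg (abs_nonneg s) hΔt.le
  have hβ : 0 < α + Δx - s * Δt := by linarith
  have hmono := @cellUpdate_mono f ρb hf hmax s q Δx Δt α hΔx hΔt hCFL hα
  have hu1 := hmono (u := u) (v := v) (w := w) (z := z)
    (u' := max u κ) (v' := max v κ) (w' := max w κ) (z' := max z κ) hu.1 hv.1 hw.1
    (max_le hu.2 hκ.2) (max_le hv.2 hκ.2) (max_le hw.2 hκ.2) (max_le hz.2 hκ.2)
    (le_max_left _ _) (le_max_left _ _) (le_max_left _ _) (le_max_left _ _)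
  have hu2 := hmono (u := κ) (v := κ) (w := κ) (z := κ)
    (u' := max u κ) (v' := max v κ) (w' := max w κ) (z' := max z κ) hκ.1 hκ.1 hκ.1
    (max_le hu.2 hκ.2) (max_le hv.2 hκ.2) (max_le hw.2 hκ.2) (max_le hz.2 hκ.2)
    (le_max_right _ _) (le_max_right _ _) (le_max_right _ _) (le_max_right _ _)
  have hl1 := hmono (u := min u κ) (v := min v κ) (w := min w κ) (z := min z κ)
    (u' := u) (v' := v) (w' := w) (z' := z)
    (le_min hu.1 hκ.1) (le_min hv.1 hκ.1) (le_min hw.1 hκ.1) hu.2 hv.2 hw.2 hz.2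
    (min_le_left _ _) (min_le_left _ _) (min_le_left _ _) (min_le_left _ _)
  have hl2 := hmono (u := min u κ) (v := min v κ) (w := min w κ) (z := min z κ)
    (u' := κ) (v' := κ) (w' := κ) (z' := κ)
    (le_min hu.1 hκ.1) (le_min hv.1 hκ.1) (le_min hw.1 hκ.1) hκ.2 hκ.2 hκ.2 hκ.2
    (min_le_right _ _) (min_le_right _ _) (min_le_right _ _) (min_le_right _ _)
  have hH : (α + Δx - s * Δt) * |Hright f ρb s q Δx Δt α u v w z - κ|
      = |cellUpdate f ρb s q Δx Δt α u v w z - (α + Δx - s * Δt) * κ| := by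
    nth_rewrite 1 [← abs_of_pos hβ]
    rw [← abs_mul, mul_sub, Hright, mul_div_cancel₀ _ hβ.ne', cellUpdate]
  have hcons : (α + Δx - s * Δt) * κ - cellUpdate f ρb s q Δx Δt α κ κ κ κ
      = Δt / 2 * Rem f s κ q := by
    rw [cellUpdate, God_self, EO_self, Rem]
    unfold Flx
    ring
  have hRem : 0 ≤ Δt / 2 * Rem f s κ q := by
    have : 0 ≤ Rem f s κ q := by
      unfold Rem
      linarith [min_le_left (Flx f s κ) q]
    positivity
  have hdiff : cellUpdate f ρb s q Δx Δt α (max u κ) (max v κ) (max w κ) (max z κ)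
        - cellUpdate f ρb s q Δx Δt α (min u κ) (min v κ) (min w κ) (min z κ)
      = α * |v - κ| + Δx * |w - κ|
        - Δt * ((EO f ρb (max w κ) (max z κ) - EO f ρb (min w κ) (min z κ))
            - (min (God f s (max u κ) (max v κ)) q
                - min (God f s (min u κ) (min v κ)) q)) := by
    rw [← max_sub_min_eq_abs' v κ, ← max_sub_min_eq_abs' w κ]
    unfold cellUpdate
    ring
  rw [hH, ← hdiff, abs_le]
  constructor <;> linarith
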